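/- arXiv:2101.12698 — 4 statements merged into one kernel-verified Lean document; each statement's English description precedes it below -/
import Mathlib

section
/- Let (X, μ) and (Y, ν) be measure spaces with μ, ν finite measures, let ψ : X ≃ Y be a measurable equivalence, assume ψ*ν := Measure.map ψ.symm ν ≪ μ, and let Φ : X → ℝ≥0 be the pointwise square root of d(ψ*ν)/dμ. Then the lightcone comparison functional satisfies the lower bound E[ψ] := ∫_X (Φ − 1)² dμ ≥ (√(ν(Y)) − √(μ(X)))². (Lower bound of Lemma 3.6, eq. (37), of the paper.) -/
open MeasureTheory
open scoped NNReal ENNReal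

/-!
Since `∫ Φ² dμ` is the total mass of `ψ*ν`, the numbers `√ν(Y)` and `√μ(X)` are the `L²(μ)`-norms of
`Φ` and of the constant function `1`, and the bound is the reverse triangle inequality in `L²(μ)`.
-/

section LpNorm

variable {X E : Type*} [MeasurableSpace X] [NormedAddCommGroup E] {μ : Measure X}
  {p : ℝ≥0∞} {f g : X → E}

theorem abs_lpNorm_sub_lpNorm_le (hf : MemLp f p μ) (hg : MemLp g p μ) (hp : 1 ≤ p) :
    |lpNorm f p μ - lpNorm g p μ| ≤ lpNorm (f - g) p μ :=
  abs_sub_le_iff.2 ⟨sub_le_iff_le_add'.2 (lpNorm_le_lpNorm_add_lpNorm_sub' hg hp),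
    sub_le_iff_le_add'.2 (lpNorm_le_lpNorm_add_lpNorm_sub hf hp)⟩

theorem lpNorm_two_eq_sqrt_integral_norm_sq (hf : AEStronglyMeasurable f μ) :
    lpNorm f 2 μ = √(∫ x, ‖f x‖ ^ 2 ∂μ) := by
  simp [lpNorm_eq_integral_norm_rpow_toReal two_ne_zero ENNReal.ofNat_ne_top hf,
    Real.sqrt_eq_rpow]

theorem lpNorm_two_sq_eq_integral_norm_sq (hf : AEStronglyMeasurable f μ) :
    lpNorm f 2 μ ^ 2 = ∫ x, ‖f x‖ ^ 2 ∂μ := by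
  rw [lpNorm_two_eq_sqrt_integral_norm_sq hf,
    Real.sq_sqrt (integral_nonneg fun _ ↦ sq_nonneg _)]

end LpNorm

theorem aemeasurable_of_coe_sq_ae_eq {X : Type*} [MeasurableSpace X] {μ : Measure X}
    {Φ : X → ℝ≥0} {ρ : X → ℝ≥0∞} (hρ : AEMeasurable ρ μ)
    (hΦ : ∀ᵐ x ∂μ, (Φ x : ℝ≥0∞) ^ 2 = ρ x) : AEMeasurable Φ μ := by
  refine (NNReal.continuous_sqrt.measurable.comp_aemeasurable hρ.ennreal_toNNReal).congr ?_
  filter_upwards [hΦ] with x hx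
  simp [← hx]

section SqrtRNDeriv

variable {X : Type*} [MeasurableSpace X] {κ μ : Measure X} [IsFiniteMeasure κ] {Φ : X → ℝ≥0}

theorem memLp_two_of_sq_ae_eq_rnDeriv
    (hΦ : ∀ᵐ x ∂μ, (Φ x : ℝ≥0∞) ^ 2 = κ.rnDeriv μ x) :
    MemLp (fun x ↦ (Φ x : ℝ)) 2 μ := by
  have hΦ_meas : AEMeasurable Φ μ :=
    aemeasurable_of_coe_sq_ae_eq (κ.measurable_rnDeriv μ).aemeasurable hΦ
  refine (memLp_two_iff_integrable_sq hΦ_meas.coe_nnreal_real.aestronglyMeasurable).2 ?_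
  refine Measure.integrable_toReal_rnDeriv.congr (f := fun x ↦ (κ.rnDeriv μ x).toReal) ?_
  filter_upwards [hΦ] with x hx
  simp [← hx]

theorem lpNorm_two_eq_sqrt_of_sq_ae_eq_rnDeriv [SigmaFinite μ] (hκμ : κ ≪ μ)
    (hΦ : ∀ᵐ x ∂μ, (Φ x : ℝ≥0∞) ^ 2 = κ.rnDeriv μ x) :
    lpNorm (fun x ↦ (Φ x : ℝ)) 2 μ = √(κ.real Set.univ) := by
  rw [lpNorm_two_eq_sqrt_integral_norm_sq (memLp_two_of_sq_ae_eq_rnDeriv hΦ).1,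
    ← Measure.integral_toReal_rnDeriv hκμ]
  congr 1
  refine integral_congr_ae ?_
  filter_upwards [hΦ] with x hx
  simp [← hx]

end SqrtRNDeriv

theorem lightcone_comparison_functional_lower_bound_general
    {X : Type*} [MeasurableSpace X] (κ μ : Measure X) [IsFiniteMeasure κ] [IsFiniteMeasure μ]
    (hκμ : κ ≪ μ) (Φ : X → ℝ≥0) (hΦ : ∀ᵐ x ∂μ, (Φ x : ℝ≥0∞) ^ 2 = κ.rnDeriv μ x) :
    (√(κ.real Set.univ) - √(μ.real Set.univ)) ^ 2 ≤ ∫ x, ((Φ x : ℝ) - 1) ^ 2 ∂μ := by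
  have hΦ_memLp : MemLp (fun x ↦ (Φ x : ℝ)) 2 μ := memLp_two_of_sq_ae_eq_rnDeriv hΦ
  have one_memLp : MemLp (fun _ ↦ (1 : ℝ)) 2 μ := memLp_const 1
  have lpNorm_one : lpNorm (fun _ ↦ (1 : ℝ)) 2 μ = √(μ.real Set.univ) := by
    simp [lpNorm_two_eq_sqrt_integral_norm_sq one_memLp.1]
  calc (√(κ.real Set.univ) - √(μ.real Set.univ)) ^ 2
      = (lpNorm (fun x ↦ (Φ x : ℝ)) 2 μ - lpNorm (fun _ ↦ (1 : ℝ)) 2 μ) ^ 2 := by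
        rw [lpNorm_two_eq_sqrt_of_sq_ae_eq_rnDeriv hκμ hΦ, lpNorm_one]
    _ ≤ lpNorm ((fun x ↦ (Φ x : ℝ)) - fun _ ↦ 1) 2 μ ^ 2 :=
        sq_le_sq.2 ((abs_lpNorm_sub_lpNorm_le hΦ_memLp one_memLp one_le_two).trans (le_abs_self _))
    _ = ∫ x, ((Φ x : ℝ) - 1) ^ 2 ∂μ := by
        simp [lpNorm_two_sq_eq_integral_norm_sq (hΦ_memLp.sub one_memLp).1]

/-- Lower bound of Lemma 3.6, eq. (37), of the paper:
E[ψ] ≥ (√A(Σ_L) − √A(Σ̂_L))². -/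
theorem lightcone_comparison_functional_lower_bound
    {X Y : Type*} [MeasurableSpace X] [MeasurableSpace Y]
    (μ : Measure X) (ν : Measure Y) [IsFiniteMeasure μ] [IsFiniteMeasure ν]
    (ψ : X ≃ᵐ Y) (hac : ν.map ψ.symm ≪ μ)
    (Φ : X → ℝ≥0)
    (hΦ : ∀ x, ((Φ x : ℝ≥0∞)) ^ 2 = (ν.map ψ.symm).rnDeriv μ x) :
    (Real.sqrt (ν Set.univ).toReal - Real.sqrt (μ Set.univ).toReal) ^ 2 ≤
      ∫ x, ((Φ x : ℝ) - 1) ^ 2 ∂μ := by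
  simpa [Measure.real, ψ.symm.map_apply] using
    lightcone_comparison_functional_lower_bound_general (ν.map ψ.symm) μ hac Φ (.of_forall hΦ)
end

section
/- Let (X, μ) and (Y, ν) be measure spaces with μ, ν finite measures, let ψ : X ≃ Y be a measurable equivalence, and assume the mutual absolute continuity Measure.map ψ.symm ν ≪ μ and μ ≪ Measure.map ψ.symm ν. Let Φ : X → ℝ≥0 be the pointwise square root of d(Measure.map ψ.symm ν)/dμ and let Φ' : Y → ℝ≥0 be the pointwise square root of d(Measure.map ψ μ)/dν. Then the lightcone comparison functional is symmetric: ∫_Y (Φ' − 1)² dν = ∫_X (Φ − 1)² dμ, i.e. E[ψ⁻¹] = E[ψ]. (Symmetry property of Lemma 3.6, eq. (32), of the paper.) -/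
open MeasureTheory
open scoped NNReal ENNReal

/-!
Pulled back along `ψ`, both functionals are `f`-divergences of the pair `ν.map ψ.symm`, `μ`, for
the function `f t = (√t - 1) ^ 2` of the squared Hellinger distance. Exchanging the two measures
replaces `f` by `t ↦ t * f t⁻¹`, which is again `f`.
-/

section FDivergence

variable {X Y E : Type*} [MeasurableSpace X] [MeasurableSpace Y]
  [NormedAddCommGroup E] [NormedSpace ℝ E]

theorem integral_comp_rnDeriv_map {f : X → Y} (hf : MeasurableEmbedding f) (μ ν : Measure X)
    [SigmaFinite μ] [SigmaFinite ν] (g : ℝ≥0∞ → E) :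
    ∫ y, g ((μ.map f).rnDeriv (ν.map f) y) ∂ν.map f = ∫ x, g (μ.rnDeriv ν x) ∂ν := by
  rw [hf.integral_map]
  exact integral_congr_ae ((hf.rnDeriv_map μ ν).fun_comp g)

theorem integral_comp_rnDeriv_swap {μ ν : Measure X} [SigmaFinite μ] [SigmaFinite ν]
    (hμν : μ ≪ ν) (hνμ : ν ≪ μ) (g : ℝ≥0∞ → E) :
    ∫ x, g (μ.rnDeriv ν x) ∂ν =
      ∫ x, (ν.rnDeriv μ x).toReal • g (ν.rnDeriv μ x)⁻¹ ∂μ := by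
  rw [← integral_rnDeriv_smul hνμ]
  refine integral_congr_ae ?_
  filter_upwards [Measure.inv_rnDeriv' hμν] with x hx
  rw [← hx, Pi.inv_apply]

end FDivergence

theorem mul_sq_sqrt_inv_sub_one {t : ℝ} (ht : 0 < t) : t * (√t⁻¹ - 1) ^ 2 = (√t - 1) ^ 2 := by
  have hsqrt : √t * √t⁻¹ = 1 := by
    rw [← Real.sqrt_mul ht.le, mul_inv_cancel₀ ht.ne', Real.sqrt_one]
  calc t * (√t⁻¹ - 1) ^ 2 = (√t * √t⁻¹ - √t) ^ 2 := by
        rw [← mul_sub_one, mul_pow, Real.sq_sqrt ht.le]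
    _ = (√t - 1) ^ 2 := by rw [hsqrt, sub_sq_comm]

theorem integral_sq_sqrt_rnDeriv_sub_one_symm {X : Type*} [MeasurableSpace X] {μ ν : Measure X}
    [SigmaFinite μ] [SigmaFinite ν] (hμν : μ ≪ ν) (hνμ : ν ≪ μ) :
    ∫ x, (√(μ.rnDeriv ν x).toReal - 1) ^ 2 ∂ν = ∫ x, (√(ν.rnDeriv μ x).toReal - 1) ^ 2 ∂μ := by
  rw [integral_comp_rnDeriv_swap hμν hνμ fun t ↦ (√t.toReal - 1) ^ 2]
  refine integral_congr_ae ?_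
  filter_upwards [Measure.rnDeriv_pos' hμν, ν.rnDeriv_ne_top μ] with x hpos htop
  rw [ENNReal.toReal_inv, smul_eq_mul, mul_sq_sqrt_inv_sub_one (ENNReal.toReal_pos hpos.ne' htop)]

theorem coe_eq_sqrt_toReal_of_sq_eq {a : ℝ≥0} {t : ℝ≥0∞} (h : (a : ℝ≥0∞) ^ 2 = t) :
    (a : ℝ) = √t.toReal := by
  rw [← h, ENNReal.toReal_pow, ENNReal.coe_toReal, Real.sqrt_sq a.coe_nonneg]

theorem lightcone_comparison_functional_symm_general
    {X Y : Type*} [MeasurableSpace X] [MeasurableSpace Y]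
    (μ : Measure X) (ν : Measure Y) [SigmaFinite μ] [SigmaFinite ν]
    (ψ : X ≃ᵐ Y)
    (hac : ν.map ψ.symm ≪ μ) (hac' : μ ≪ ν.map ψ.symm)
    (Φ : X → ℝ≥0) (Φ' : Y → ℝ≥0)
    (hΦ : ∀ᵐ x ∂μ, ((Φ x : ℝ≥0∞)) ^ 2 = (ν.map ψ.symm).rnDeriv μ x)
    (hΦ' : ∀ᵐ y ∂ν, ((Φ' y : ℝ≥0∞)) ^ 2 = (μ.map ψ).rnDeriv ν y) :
    ∫ y, ((Φ' y : ℝ) - 1) ^ 2 ∂ν = ∫ x, ((Φ x : ℝ) - 1) ^ 2 ∂μ := by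
  have : SigmaFinite (ν.map ψ.symm) := ψ.symm.sigmaFinite_map
  have hmap : (ν.map ψ.symm).map ψ = ν := ψ.map_map_symm
  calc ∫ y, ((Φ' y : ℝ) - 1) ^ 2 ∂ν
      = ∫ y, (√((μ.map ψ).rnDeriv ν y).toReal - 1) ^ 2 ∂ν :=
        integral_congr_ae <| hΦ'.mono fun y hy ↦ by simp only [coe_eq_sqrt_toReal_of_sq_eq hy]
    _ = ∫ x, (√(μ.rnDeriv (ν.map ψ.symm) x).toReal - 1) ^ 2 ∂ν.map ψ.symm := by
        simpa only [hmap] using integral_comp_rnDeriv_map ψ.measurableEmbedding μ (ν.map ψ.symm)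
          fun t ↦ (√t.toReal - 1) ^ 2
    _ = ∫ x, (√((ν.map ψ.symm).rnDeriv μ x).toReal - 1) ^ 2 ∂μ :=
        integral_sq_sqrt_rnDeriv_sub_one_symm hac' hac
    _ = ∫ x, ((Φ x : ℝ) - 1) ^ 2 ∂μ :=
        integral_congr_ae <| hΦ.mono fun x hx ↦ by simp only [coe_eq_sqrt_toReal_of_sq_eq hx]

/-- Symmetry of the lightcone comparison functional (Lemma 3.6, eq. (32), of the
paper): E[ψ⁻¹] = E[ψ]. -/
theorem lightcone_comparison_functional_symm
    {X Y : Type*} [MeasurableSpace X] [MeasurableSpace Y]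
    (μ : Measure X) (ν : Measure Y) [IsFiniteMeasure μ] [IsFiniteMeasure ν]
    (ψ : X ≃ᵐ Y)
    (hac : ν.map ψ.symm ≪ μ) (hac' : μ ≪ ν.map ψ.symm)
    (Φ : X → ℝ≥0) (Φ' : Y → ℝ≥0)
    (hΦ : ∀ x, ((Φ x : ℝ≥0∞)) ^ 2 = (ν.map ψ.symm).rnDeriv μ x)
    (hΦ' : ∀ y, ((Φ' y : ℝ≥0∞)) ^ 2 = (μ.map ψ).rnDeriv ν y) :
    ∫ y, ((Φ' y : ℝ) - 1) ^ 2 ∂ν = ∫ x, ((Φ x : ℝ) - 1) ^ 2 ∂μ :=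
  lightcone_comparison_functional_symm_general μ ν ψ hac hac' Φ Φ' (.of_forall hΦ) (.of_forall hΦ')
end

section
/- Let (X, μ), (Y, ν), (Z, ρ) be measure spaces with μ, ν, ρ finite measures, let ψ : X ≃ Y and σ : Y ≃ Z be measurable equivalences, and assume Measure.map ψ.symm ν ≪ μ and Measure.map σ.symm ρ ≪ ν. Let Φ_{XY}, Φ_{YZ}, Φ_{XZ} be the conformal factors (pointwise square roots of the Radon–Nikodym derivatives) of ψ, σ, and σ ∘ ψ respectively. Then the square roots of the lightcone comparison functionals satisfy the triangle inequality √(∫_X (Φ_{XZ} − 1)² dμ) ≤ √(∫_X (Φ_{XY} − 1)² dμ) + √(∫_Y (Φ_{YZ} − 1)² dν). (Triangle inequality underlying property (iv) of the distance in Theorem 4.3 of the paper, obtained from the chain rule Φ_{XZ} = (Φ_{YZ}∘ψ)·Φ_{XY}, the change-of-variables formula, and the Minkowski inequality in L²(μ).) -/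
open MeasureTheory
open scoped NNReal ENNReal

/-! By the chain rule `Φ_XZ = (Φ_YZ ∘ ψ) · Φ_XY` almost everywhere, so
`Φ_XZ - 1 = (Φ_XY - 1) + ((Φ_YZ - 1) ∘ ψ) · Φ_XY`. As `Φ_XY ^ 2` is the density of the pullback
of `ν`, the map `f ↦ (f ∘ ψ) · Φ_XY` is a contraction from `L²(ν)` to `L²(μ)`, and Minkowski's
inequality in `L²(μ)` concludes. -/

lemma sqrt_integral_sq_eq_toReal_eLpNorm {X : Type*} [MeasurableSpace X] {μ : Measure X}
    {f : X → ℝ} (hf : AEStronglyMeasurable f μ) :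
    √(∫ x, f x ^ 2 ∂μ) = (eLpNorm f 2 μ).toReal := by
  rw [toReal_eLpNorm hf, lpNorm_eq_integral_norm_rpow_toReal two_ne_zero ENNReal.ofNat_ne_top hf,
    Real.sqrt_eq_rpow]
  simp

lemma eLpNorm_two_sq_eq_lintegral {X E : Type*} [MeasurableSpace X] [ENorm E] (f : X → E)
    (μ : Measure X) : eLpNorm f 2 μ ^ 2 = ∫⁻ x, ‖f x‖ₑ ^ 2 ∂μ := by
  simpa using eLpNorm_nnreal_pow_eq_lintegral (μ := μ) (f := f) (p := 2) two_ne_zero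

/-- `Φ` is a conformal factor of `φ : (X, μ) ≃ᵐ (Y, ν)`: its square is the density with respect to
`μ` of the pullback of `ν` by `φ`. The pullback is encoded as the pushforward by `φ.symm`, and since
densities are only determined almost everywhere, so is `Φ`. -/
def IsConformalFactor {X Y : Type*} [MeasurableSpace X] [MeasurableSpace Y] (φ : X ≃ᵐ Y)
    (μ : Measure X) (ν : Measure Y) (Φ : X → ℝ≥0) : Prop :=
  ∀ᵐ x ∂μ, (Φ x : ℝ≥0∞) ^ 2 = (ν.map φ.symm).rnDeriv μ x

namespace IsConformalFactor

section Single

variable {X Y : Type*} [MeasurableSpace X] [MeasurableSpace Y] {φ : X ≃ᵐ Y} {μ : Measure X}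
  {ν : Measure Y} {Φ Φ' : X → ℝ≥0}

lemma ae_eq (h : IsConformalFactor φ μ ν Φ) (h' : IsConformalFactor φ μ ν Φ') : Φ =ᵐ[μ] Φ' := by
  filter_upwards [h, h'] with x hx hx'
  have sq_eq_sq : Φ x ^ 2 = Φ' x ^ 2 := mod_cast hx.trans hx'.symm
  exact (pow_left_inj₀ zero_le zero_le two_ne_zero).1 sq_eq_sq

lemma aemeasurable (h : IsConformalFactor φ μ ν Φ) : AEMeasurable Φ μ := by
  refine ⟨fun x ↦ NNReal.sqrt ((ν.map φ.symm).rnDeriv μ x).toNNReal, by fun_prop, ?_⟩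
  filter_upwards [h] with x hx
  rw [← hx, ← ENNReal.coe_pow, ENNReal.toNNReal_coe, NNReal.sqrt_sq]

lemma lintegral_comp_mul_sq_le (h : IsConformalFactor φ μ ν Φ) (g : Y → ℝ≥0∞) :
    ∫⁻ x, g (φ x) * (Φ x : ℝ≥0∞) ^ 2 ∂μ ≤ ∫⁻ y, g y ∂ν := by
  have hΦ : AEMeasurable (fun x ↦ (Φ x : ℝ≥0∞) ^ 2) μ :=
    h.aemeasurable.coe_nnreal_ennreal.pow_const 2
  calc ∫⁻ x, g (φ x) * (Φ x : ℝ≥0∞) ^ 2 ∂μ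
      = ∫⁻ x, g (φ x) ∂μ.withDensity (fun x ↦ (Φ x : ℝ≥0∞) ^ 2) := by
        rw [lintegral_withDensity_eq_lintegral_mul_non_measurable₀ μ hΦ
          (ae_of_all _ fun _ ↦ by finiteness)]
        simp only [Pi.mul_apply, mul_comm]
    _ = ∫⁻ x, g (φ x) ∂μ.withDensity ((ν.map φ.symm).rnDeriv μ) := by
        rw [withDensity_congr_ae h]
    _ ≤ ∫⁻ x, g (φ x) ∂ν.map φ.symm :=
        lintegral_mono' (Measure.withDensity_rnDeriv_le _ _) le_rfl
    _ = ∫⁻ y, g y ∂ν := by simp only [lintegral_map_equiv, MeasurableEquiv.apply_symm_apply]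

lemma eLpNorm_comp_mul_le (h : IsConformalFactor φ μ ν Φ) (f : Y → ℝ) :
    eLpNorm (fun x ↦ f (φ x) * Φ x) 2 μ ≤ eLpNorm f 2 ν := by
  rw [← ENNReal.pow_le_pow_left_iff two_ne_zero, eLpNorm_two_sq_eq_lintegral,
    eLpNorm_two_sq_eq_lintegral]
  simpa only [enorm_mul, NNReal.enorm_eq, mul_pow] using
    h.lintegral_comp_mul_sq_le fun y ↦ ‖f y‖ₑ ^ 2

lemma memLp_two [IsFiniteMeasure ν] (h : IsConformalFactor φ μ ν Φ) :
    MemLp (fun x ↦ (Φ x : ℝ)) 2 μ := by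
  refine ⟨h.aemeasurable.coe_nnreal_real.aestronglyMeasurable, ?_⟩
  simpa only [one_mul] using
    (h.eLpNorm_comp_mul_le fun _ ↦ 1).trans_lt (memLp_const (1 : ℝ)).eLpNorm_lt_top

end Single

section Composition

variable {X Y Z : Type*} [MeasurableSpace X] [MeasurableSpace Y] [MeasurableSpace Z]
  {μ : Measure X} {ν : Measure Y} {ρ : Measure Z} [SigmaFinite μ] [SigmaFinite ν] [SigmaFinite ρ]
  {ψ : X ≃ᵐ Y} {σ : Y ≃ᵐ Z} {ΦXY : X → ℝ≥0} {ΦYZ : Y → ℝ≥0} {ΦXZ : X → ℝ≥0}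

lemma trans (hac : ρ.map σ.symm ≪ ν) (hXY : IsConformalFactor ψ μ ν ΦXY)
    (hYZ : IsConformalFactor σ ν ρ ΦYZ) :
    IsConformalFactor (ψ.trans σ) μ ρ (fun x ↦ ΦYZ (ψ x) * ΦXY x) := by
  have := ψ.symm.sigmaFinite_map (μ := ν)
  have := σ.symm.sigmaFinite_map (μ := ρ)
  have := ψ.symm.sigmaFinite_map (μ := ρ.map σ.symm)
  have pullback_trans : ρ.map (ψ.trans σ).symm = (ρ.map σ.symm).map ψ.symm :=
    (Measure.map_map ψ.symm.measurable σ.symm.measurable).symm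
  have sq_comp_eq_rnDeriv : ∀ᵐ x ∂ν.map ψ.symm, (ΦYZ (ψ x) : ℝ≥0∞) ^ 2 =
      ((ρ.map σ.symm).map ψ.symm).rnDeriv (ν.map ψ.symm) x := by
    rw [ψ.symm.measurableEmbedding.ae_map_iff]
    filter_upwards [hYZ, ψ.symm.measurableEmbedding.rnDeriv_map (ρ.map σ.symm) ν] with y hy hy'
    rw [ψ.apply_symm_apply, hy, hy']
  have chain_rule := Measure.rnDeriv_mul_rnDeriv (κ := μ) (hac.map ψ.symm.measurable)
  unfold IsConformalFactor
  rw [pullback_trans]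
  filter_upwards [hXY, Measure.ae_rnDeriv_ne_zero_imp_of_ae μ sq_comp_eq_rnDeriv, chain_rule]
    with x hx hx_of_ne_zero hx_chain
  rw [← hx_chain, Pi.mul_apply, ENNReal.coe_mul, mul_pow, hx]
  -- `ΦYZ ∘ ψ` is determined only almost everywhere for the pullback of `ν`, but both sides vanish
  -- where the density of that pullback does.
  obtain hzero | hne := eq_or_ne ((ν.map ψ.symm).rnDeriv μ x) 0
  · simp only [hzero, mul_zero]
  · rw [hx_of_ne_zero hne]

lemma eLpNorm_sub_one_le_add (hac : ρ.map σ.symm ≪ ν) (hXY : IsConformalFactor ψ μ ν ΦXY)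
    (hYZ : IsConformalFactor σ ν ρ ΦYZ) (hXZ : IsConformalFactor (ψ.trans σ) μ ρ ΦXZ) :
    eLpNorm (fun x ↦ (ΦXZ x : ℝ) - 1) 2 μ ≤
      eLpNorm (fun x ↦ (ΦXY x : ℝ) - 1) 2 μ + eLpNorm (fun y ↦ (ΦYZ y : ℝ) - 1) 2 ν := by
  have chain_rule : ΦXZ =ᵐ[μ] fun x ↦ ΦYZ (ψ x) * ΦXY x := hXZ.ae_eq (hXY.trans hac hYZ)
  have sub_eq : (fun x ↦ (ΦXZ x : ℝ) - ΦXY x) =ᵐ[μ] fun x ↦ ((ΦYZ (ψ x) : ℝ) - 1) * ΦXY x := by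
    filter_upwards [chain_rule] with x hx
    rw [hx, NNReal.coe_mul, sub_one_mul]
  have hmXY := hXY.aemeasurable.coe_nnreal_real
  have hmXZ := hXZ.aemeasurable.coe_nnreal_real
  calc eLpNorm (fun x ↦ (ΦXZ x : ℝ) - 1) 2 μ
      = eLpNorm ((fun x ↦ (ΦXY x : ℝ) - 1) + fun x ↦ (ΦXZ x : ℝ) - ΦXY x) 2 μ := by
        congr 1 with x
        simp only [Pi.add_apply, sub_add_sub_cancel']
    _ ≤ eLpNorm (fun x ↦ (ΦXY x : ℝ) - 1) 2 μ + eLpNorm (fun x ↦ (ΦXZ x : ℝ) - ΦXY x) 2 μ :=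
        eLpNorm_add_le (hmXY.sub_const 1).aestronglyMeasurable
          (hmXZ.sub hmXY).aestronglyMeasurable one_le_two
    _ = eLpNorm (fun x ↦ (ΦXY x : ℝ) - 1) 2 μ +
          eLpNorm (fun x ↦ ((ΦYZ (ψ x) : ℝ) - 1) * ΦXY x) 2 μ := by
        rw [eLpNorm_congr_ae sub_eq]
    _ ≤ eLpNorm (fun x ↦ (ΦXY x : ℝ) - 1) 2 μ + eLpNorm (fun y ↦ (ΦYZ y : ℝ) - 1) 2 ν := by
        gcongr
        exact hXY.eLpNorm_comp_mul_le fun y ↦ (ΦYZ y : ℝ) - 1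

end Composition

end IsConformalFactor

theorem lightcone_comparison_functional_triangle_general
    {X Y Z : Type*} [MeasurableSpace X] [MeasurableSpace Y] [MeasurableSpace Z]
    {μ : Measure X} {ν : Measure Y} {ρ : Measure Z}
    [SigmaFinite μ] [SigmaFinite ν] [SigmaFinite ρ]
    {ψ : X ≃ᵐ Y} {σ : Y ≃ᵐ Z} (hac : ρ.map σ.symm ≪ ν)
    {ΦXY : X → ℝ≥0} {ΦYZ : Y → ℝ≥0} {ΦXZ : X → ℝ≥0}
    (hXY : IsConformalFactor ψ μ ν ΦXY) (hYZ : IsConformalFactor σ ν ρ ΦYZ)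
    (hXZ : IsConformalFactor (ψ.trans σ) μ ρ ΦXZ)
    (hLpXY : MemLp (fun x ↦ (ΦXY x : ℝ) - 1) 2 μ) (hLpYZ : MemLp (fun y ↦ (ΦYZ y : ℝ) - 1) 2 ν) :
    √(∫ x, ((ΦXZ x : ℝ) - 1) ^ 2 ∂μ) ≤
      √(∫ x, ((ΦXY x : ℝ) - 1) ^ 2 ∂μ) + √(∫ y, ((ΦYZ y : ℝ) - 1) ^ 2 ∂ν) := by
  rw [sqrt_integral_sq_eq_toReal_eLpNorm
      (hXZ.aemeasurable.coe_nnreal_real.sub_const 1).aestronglyMeasurable,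
    sqrt_integral_sq_eq_toReal_eLpNorm hLpXY.aestronglyMeasurable,
    sqrt_integral_sq_eq_toReal_eLpNorm hLpYZ.aestronglyMeasurable,
    ← ENNReal.toReal_add hLpXY.eLpNorm_ne_top hLpYZ.eLpNorm_ne_top]
  exact ENNReal.toReal_mono (ENNReal.add_ne_top.2 ⟨hLpXY.eLpNorm_ne_top, hLpYZ.eLpNorm_ne_top⟩)
    (hXY.eLpNorm_sub_one_le_add hac hYZ hXZ)

/-- Triangle inequality for the square roots of the lightcone comparison
functionals (underlying property (iv) of the distance in Theorem 4.3 of the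
paper). -/
theorem lightcone_comparison_functional_triangle
    {X Y Z : Type*} [MeasurableSpace X] [MeasurableSpace Y] [MeasurableSpace Z]
    (μ : Measure X) (ν : Measure Y) (ρ : Measure Z)
    [IsFiniteMeasure μ] [IsFiniteMeasure ν] [IsFiniteMeasure ρ]
    (ψ : X ≃ᵐ Y) (σ : Y ≃ᵐ Z)
    (hacψ : ν.map ψ.symm ≪ μ) (hacσ : ρ.map σ.symm ≪ ν)
    (ΦXY : X → ℝ≥0) (ΦYZ : Y → ℝ≥0) (ΦXZ : X → ℝ≥0)
    (hΦXY : ∀ x, ((ΦXY x : ℝ≥0∞)) ^ 2 = (ν.map ψ.symm).rnDeriv μ x)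
    (hΦYZ : ∀ y, ((ΦYZ y : ℝ≥0∞)) ^ 2 = (ρ.map σ.symm).rnDeriv ν y)
    (hΦXZ : ∀ x, ((ΦXZ x : ℝ≥0∞)) ^ 2 = (ρ.map (ψ.trans σ).symm).rnDeriv μ x) :
    Real.sqrt (∫ x, ((ΦXZ x : ℝ) - 1) ^ 2 ∂μ) ≤
      Real.sqrt (∫ x, ((ΦXY x : ℝ) - 1) ^ 2 ∂μ) +
        Real.sqrt (∫ y, ((ΦYZ y : ℝ) - 1) ^ 2 ∂ν) := by
  have hXY : IsConformalFactor ψ μ ν ΦXY := ae_of_all _ hΦXY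
  have hYZ : IsConformalFactor σ ν ρ ΦYZ := ae_of_all _ hΦYZ
  exact lightcone_comparison_functional_triangle_general hacσ hXY hYZ (ae_of_all _ hΦXZ)
    (hXY.memLp_two.sub (memLp_const 1)) (hYZ.memLp_two.sub (memLp_const 1))
end

section
/- Let (X, μ) be a finite measure space, let ρ be a finite measure on X with ρ ≪ μ, let Φ : X → ℝ≥0 be the pointwise square root of dρ/dμ, and let f : X → ℝ be measurable. Set μ' := μ.withDensity (fun x => ENNReal.ofReal (Real.exp (2 * f x))). Then ρ ≪ μ', the Radon–Nikodym derivative satisfies √(dρ/dμ') = Real.exp(−f) · Φ μ-almost everywhere, and consequently ∫_X (√(dρ/dμ') − 1)² dμ' = ∫_X (Real.exp(−f(x)) · Φ(x) − 1)² · Real.exp(2 f x) dμ(x). (Paper eq. (40): the transformation law of the lightcone comparison functional under a conformal rescaling ĥ → e^{2f} ĥ of the reference metric, showing E is not conformally invariant.) -/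
open MeasureTheory
open scoped NNReal ENNReal

section

variable {X : Type*} [MeasurableSpace X]

/-- The area measure of `e^{2f} ĥ`, where `μ` is the area measure of the metric `ĥ` on a surface;
the exponent `2` reflects that the area of a surface scales as the square of lengths. -/
noncomputable def conformalRescaling (μ : Measure X) (f : X → ℝ) : Measure X :=
  μ.withDensity fun x => ENNReal.ofReal (Real.exp (2 * f x))

/-- The conformal factor `Φ`, with `Φ² = dρ/dm`, of the physical area measure `ρ` relative to the
reference area measure `m`. It is `0`, by convention, where the derivative is infinite. -/
noncomputable def conformalFactor (ρ m : Measure X) (x : X) : ℝ :=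
  √(ρ.rnDeriv m x).toReal

/-- The lightcone comparison functional `E` of the physical area measure `ρ` with respect to the
reference area measure `m`. As a Bochner integral it is `0` when the integrand is not
integrable. -/
noncomputable def lightconeFunctional (ρ m : Measure X) : ℝ :=
  ∫ x, (conformalFactor ρ m x - 1) ^ 2 ∂m

section ConformalRescaling

variable {μ : Measure X} {f : X → ℝ}

theorem absolutelyContinuous_conformalRescaling (hf : AEMeasurable f μ) :
    μ ≪ conformalRescaling μ f :=
  withDensity_absolutelyContinuous' (by fun_prop)
    (ae_of_all _ fun x => (ENNReal.ofReal_pos.2 (Real.exp_pos (2 * f x))).ne')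

theorem integral_conformalRescaling {E : Type*} [NormedAddCommGroup E] [NormedSpace ℝ E]
    (hf : AEMeasurable f μ) (g : X → E) :
    ∫ x, g x ∂conformalRescaling μ f = ∫ x, Real.exp (2 * f x) • g x ∂μ := by
  simpa only [conformalRescaling, ENNReal.toReal_ofReal (Real.exp_pos _).le] using
    integral_withDensity_eq_integral_toReal_smul₀
      (f := fun x => ENNReal.ofReal (Real.exp (2 * f x))) (by fun_prop)
      (ae_of_all _ fun _ => ENNReal.ofReal_lt_top) g

theorem rnDeriv_conformalRescaling (ρ : Measure X) [SigmaFinite ρ] [SigmaFinite μ]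
    (hf : AEMeasurable f μ) :
    ρ.rnDeriv (conformalRescaling μ f) =ᵐ[μ]
      fun x => ENNReal.ofReal (Real.exp (-(2 * f x))) * ρ.rnDeriv μ x := by
  have chain_rule := Measure.rnDeriv_withDensity_right ρ μ
    (f := fun x => ENNReal.ofReal (Real.exp (2 * f x))) (by fun_prop)
    (ae_of_all _ fun x => (ENNReal.ofReal_pos.2 (Real.exp_pos (2 * f x))).ne')
    (ae_of_all _ fun _ => ENNReal.ofReal_ne_top)
  simpa only [conformalRescaling, Real.exp_neg, ENNReal.ofReal_inv_of_pos (Real.exp_pos _)]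
    using chain_rule

theorem conformalFactor_conformalRescaling (ρ : Measure X) [SigmaFinite ρ] [SigmaFinite μ]
    (hf : AEMeasurable f μ) :
    conformalFactor ρ (conformalRescaling μ f) =ᵐ[μ]
      fun x => Real.exp (-(f x)) * conformalFactor ρ μ x := by
  filter_upwards [rnDeriv_conformalRescaling ρ hf] with x hx
  have sqrt_exp : √(Real.exp (-(2 * f x))) = Real.exp (-(f x)) := by
    rw [← Real.exp_half]
    ring_nf
  rw [conformalFactor, hx, ENNReal.toReal_mul, ENNReal.toReal_ofReal (Real.exp_pos _).le,
    Real.sqrt_mul (Real.exp_pos _).le, sqrt_exp, conformalFactor]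

theorem lightconeFunctional_conformalRescaling (ρ : Measure X) [SigmaFinite ρ] [SigmaFinite μ]
    (hf : AEMeasurable f μ) :
    lightconeFunctional ρ (conformalRescaling μ f) =
      ∫ x, (Real.exp (-(f x)) * conformalFactor ρ μ x - 1) ^ 2 * Real.exp (2 * f x) ∂μ := by
  rw [lightconeFunctional, integral_conformalRescaling hf]
  refine integral_congr_ae ?_
  filter_upwards [conformalFactor_conformalRescaling ρ hf] with x hx
  rw [hx, smul_eq_mul, mul_comm]

end ConformalRescaling

theorem conformalFactor_eq_of_sq_eq {ρ m : Measure X} {x : X} {c : ℝ≥0}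
    (hc : (c : ℝ≥0∞) ^ 2 = ρ.rnDeriv m x) : conformalFactor ρ m x = c := by
  rw [conformalFactor, ← hc, ENNReal.toReal_pow, ENNReal.coe_toReal, Real.sqrt_sq c.coe_nonneg]

theorem lightcone_functional_conformal_rescaling_general
    (μ : Measure X) [SigmaFinite μ] (ρ : Measure X) [SigmaFinite ρ] (hac : ρ ≪ μ)
    (Φ : X → ℝ≥0) (hΦ : ∀ᵐ x ∂μ, (Φ x : ℝ≥0∞) ^ 2 = ρ.rnDeriv μ x)
    (f : X → ℝ) (hf : AEMeasurable f μ) :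
    ρ ≪ conformalRescaling μ f ∧
    (∀ᵐ x ∂μ, conformalFactor ρ (conformalRescaling μ f) x = Real.exp (-(f x)) * Φ x) ∧
    lightconeFunctional ρ (conformalRescaling μ f) =
      ∫ x, (Real.exp (-(f x)) * Φ x - 1) ^ 2 * Real.exp (2 * f x) ∂μ := by
  have factor_eq : ∀ᵐ x ∂μ, conformalFactor ρ μ x = Φ x :=
    hΦ.mono fun _ => conformalFactor_eq_of_sq_eq
  refine ⟨hac.trans (absolutelyContinuous_conformalRescaling hf), ?_, ?_⟩
  · filter_upwards [conformalFactor_conformalRescaling ρ hf, factor_eq] with x hx hΦx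
    rw [hx, hΦx]
  · rw [lightconeFunctional_conformalRescaling ρ hf]
    refine integral_congr_ae ?_
    filter_upwards [factor_eq] with x hΦx
    rw [hΦx]

end

/-- Paper eq. (40): the transformation law of the lightcone comparison functional
under a conformal rescaling ĥ → e^{2f} ĥ of the reference metric (the area
measure is multiplied by the density e^{2f}), showing that the functional E is
not conformally invariant. -/
theorem lightcone_functional_conformal_rescaling
    {X : Type*} [MeasurableSpace X]
    (μ : Measure X) [IsFiniteMeasure μ]
    (ρ : Measure X) [IsFiniteMeasure ρ] (hac : ρ ≪ μ)
    (Φ : X → ℝ≥0)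
    (hΦ : ∀ x, ((Φ x : ℝ≥0∞)) ^ 2 = ρ.rnDeriv μ x)
    (f : X → ℝ) (hf : Measurable f) :
    ρ ≪ μ.withDensity (fun x => ENNReal.ofReal (Real.exp (2 * f x))) ∧
    (∀ᵐ x ∂μ,
      Real.sqrt ((ρ.rnDeriv
          (μ.withDensity (fun x => ENNReal.ofReal (Real.exp (2 * f x)))) x).toReal) =
        Real.exp (-(f x)) * (Φ x : ℝ)) ∧
    ∫ x, (Real.sqrt ((ρ.rnDeriv
          (μ.withDensity (fun x => ENNReal.ofReal (Real.exp (2 * f x)))) x).toReal) - 1) ^ 2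
        ∂(μ.withDensity (fun x => ENNReal.ofReal (Real.exp (2 * f x)))) =
      ∫ x, ((Real.exp (-(f x)) * (Φ x : ℝ) - 1) ^ 2 * Real.exp (2 * f x)) ∂μ :=
  lightcone_functional_conformal_rescaling_general μ ρ hac Φ (ae_of_all _ hΦ) f hf.aemeasurable
end
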